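/- arXiv:1801.08461 — 2 statements merged into one kernel-verified Lean document; each statement's English description precedes it below -/
import Mathlib

section
/- On ℝ² consider the vector field X(x,y) = (x² + y²)·(−y, x), whose flow φ rotates each point p by angle ‖p‖²·t (i.e. φ_t(p) = R_{‖p‖² t}(p), where R_θ is rotation by θ about the origin), and consider the compact φ-invariant set Λ = {p ∈ ℝ² : ‖p‖ = e^{−n} for some integer n ≥ 1} ∪ {(0,0)}. Then the restricted flow φ|Λ is not efficient. -/
open Metric Set Function

noncomputable section

/-- The set of increasing homeomorphisms of `ℝ`, viewed as continuous strictly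
increasing surjections `ℝ → ℝ`. -/
def IsHplus (h : ℝ → ℝ) : Prop :=
  Continuous h ∧ StrictMono h ∧ Function.Surjective h

/-- Increasing homeomorphisms of `ℝ` fixing `0`. -/
def IsHplus0 (h : ℝ → ℝ) : Prop := IsHplus h ∧ h 0 = 0

/-- The orbit `φ_ℝ(x)` of a point under a flow. -/
def orb {α : Type*} (φ : ℝ → α → α) (x : α) : Set α := Set.range fun t => φ t x

/-- The orbit segment `φ_{[a,b]}(x)` (where `[a,b]` is the closed interval between
`a` and `b`, also when `a > b`). -/
def arc {α : Type*} (φ : ℝ → α → α) (x : α) (a b : ℝ) : Set α :=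
  (fun t => φ t x) '' Set.uIcc a b

abbrev Euc (d : ℕ) := EuclideanSpace ℝ (Fin d)

/-- A flow on a subset `M` of a topological space: continuous on `ℝ × M`, maps `M`
to itself, `φ_0 = id` and `φ_{s+t} = φ_s ∘ φ_t` on `M`. -/
def FlowOn {α : Type*} [TopologicalSpace α] (φ : ℝ → α → α) (M : Set α) : Prop :=
  ContinuousOn (fun p : ℝ × α => φ p.1 p.2) (Set.univ ×ˢ M) ∧
  (∀ t : ℝ, Set.MapsTo (φ t) M M) ∧ (∀ x ∈ M, φ 0 x = x) ∧
  ∀ s t : ℝ, ∀ x ∈ M, φ (s + t) x = φ s (φ t x)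

/-- The fixed points of the flow lying in `M`. -/
def fixOn {α : Type*} (φ : ℝ → α → α) (M : Set α) : Set α :=
  {σ ∈ M | ∀ t : ℝ, φ t σ = σ}

/-- `φ|Λ` is efficient: there is `δ* > 0` such that whenever `0 < δ < δ*`,
`x ∈ Λ \ fix(φ)`, `g ∈ H⁺(ℝ)`, `dist (φ_t x) (φ_{g t} x) < δ‖X (φ_t x)‖` for all `t`
and `diam (φ_{[t, g t]} x) < δ*` for all `t`, then
`φ_{[t, g t]} x ⊆ B(φ_t x, δ‖X (φ_t x)‖)` for all `t`. -/
def Efficient {d : ℕ} (φ : ℝ → Euc d → Euc d) (X : Euc d → Euc d)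
    (Λ : Set (Euc d)) : Prop :=
  ∃ δs > (0 : ℝ), ∀ δ : ℝ, 0 < δ → δ < δs → ∀ x ∈ Λ, (¬ ∀ t : ℝ, φ t x = x) →
    ∀ g : ℝ → ℝ, IsHplus g →
    (∀ t : ℝ, dist (φ t x) (φ (g t) x) < δ * ‖X (φ t x)‖) →
    (∀ t : ℝ, Metric.diam (arc φ x t (g t)) < δs) →
    ∀ t : ℝ, arc φ x t (g t) ⊆ Metric.ball (φ t x) (δ * ‖X (φ t x)‖)

/-- Rotation of the plane by angle `θ` about the origin. -/
def rot (θ : ℝ) (p : Euc 2) : Euc 2 :=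
  (WithLp.equiv 2 (Fin 2 → ℝ)).symm
    ![Real.cos θ * p 0 - Real.sin θ * p 1, Real.sin θ * p 0 + Real.cos θ * p 1]

/-- The vector field `X(x, y) = (x² + y²)·(−y, x)` on `ℝ²`. -/
def Xex (p : Euc 2) : Euc 2 :=
  (WithLp.equiv 2 (Fin 2 → ℝ)).symm
    ![(p 0 ^ 2 + p 1 ^ 2) * (-(p 1)), (p 0 ^ 2 + p 1 ^ 2) * p 0]

/-- The flow of `Xex`: it rotates each point `p` by the angle `‖p‖² · t`. -/
def phiEx (t : ℝ) (p : Euc 2) : Euc 2 := rot (‖p‖ ^ 2 * t) p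

/-- The compact invariant set
`Λ = {p ∈ ℝ² : ‖p‖ = e^{−n}, n ∈ ℤ, n ≥ 1} ∪ {(0,0)}`. -/
def LamEx : Set (Euc 2) :=
  {p : Euc 2 | ∃ n : ℕ, 1 ≤ n ∧ ‖p‖ = Real.exp (-(n : ℝ))} ∪ {0}

theorem norm_rot (θ : ℝ) (p : Euc 2) : ‖rot θ p‖ = ‖p‖ := by
  rw [EuclideanSpace.norm_eq, EuclideanSpace.norm_eq]
  congr 1
  simp only [rot, WithLp.equiv_symm_apply, Fin.sum_univ_two, Real.norm_eq_abs, sq_abs,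
    Matrix.cons_val_zero, Matrix.cons_val_one]
  linear_combination (p 0 ^ 2 + p 1 ^ 2) * Real.sin_sq_add_cos_sq θ

theorem rot_zero (p : Euc 2) : rot 0 p = p := by
  ext i
  fin_cases i <;> simp [rot]

theorem rot_pi (p : Euc 2) : rot Real.pi p = -p := by
  ext i
  fin_cases i <;> simp [rot]

theorem rot_add_two_pi (θ : ℝ) (p : Euc 2) : rot (θ + 2 * Real.pi) p = rot θ p := by
  simp [rot]

theorem norm_Xex (p : Euc 2) : ‖Xex p‖ = ‖p‖ ^ 3 := by
  have h : ‖p‖ ^ 2 = p 0 ^ 2 + p 1 ^ 2 := by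
    simp [EuclideanSpace.norm_sq_eq, Fin.sum_univ_two]
  refine (sq_eq_sq₀ (norm_nonneg _) (by positivity)).1 ?_
  rw [← pow_mul, mul_comm, pow_mul, h, EuclideanSpace.norm_sq_eq]
  simp only [Xex, WithLp.equiv_symm_apply, Fin.sum_univ_two, Real.norm_eq_abs, sq_abs,
    Matrix.cons_val_zero, Matrix.cons_val_one]
  ring

theorem norm_phiEx (t : ℝ) (p : Euc 2) : ‖phiEx t p‖ = ‖p‖ := norm_rot _ p

theorem phiEx_zero (p : Euc 2) : phiEx 0 p = p := by
  rw [phiEx, mul_zero, rot_zero]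

theorem phiEx_half_period {p : Euc 2} (hp : p ≠ 0) : phiEx (Real.pi / ‖p‖ ^ 2) p = -p := by
  have h : ‖p‖ ≠ 0 := norm_ne_zero_iff.2 hp
  rw [phiEx, mul_div_cancel₀ _ (pow_ne_zero 2 h), rot_pi]

theorem phiEx_add_period (t : ℝ) {p : Euc 2} (hp : p ≠ 0) :
    phiEx (t + 2 * Real.pi / ‖p‖ ^ 2) p = phiEx t p := by
  have h : ‖p‖ ≠ 0 := norm_ne_zero_iff.2 hp
  rw [phiEx, mul_add, mul_div_cancel₀ _ (pow_ne_zero 2 h), rot_add_two_pi, phiEx]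

theorem diam_arc_phiEx_le (p : Euc 2) (a b : ℝ) : diam (arc phiEx p a b) ≤ 2 * ‖p‖ := by
  refine diam_le_of_forall_dist_le (by positivity) ?_
  rintro _ ⟨s, -, rfl⟩ _ ⟨t, -, rfl⟩
  have h := dist_le_norm_add_norm (phiEx s p) (phiEx t p)
  rw [norm_phiEx, norm_phiEx] at h
  linarith

theorem isHplus_add_const (c : ℝ) : IsHplus (fun t => t + c) :=
  ⟨by fun_prop, fun _ _ h => add_lt_add_left h c, fun y => ⟨y - c, sub_add_cancel y c⟩⟩

theorem exists_mem_LamEx_norm_lt {ε : ℝ} (hε : 0 < ε) :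
    ∃ x ∈ LamEx, x ≠ 0 ∧ ‖x‖ < 1 ∧ ‖x‖ < ε := by
  obtain ⟨n, hn⟩ := exists_nat_gt (-Real.log ε)
  obtain ⟨x, hx⟩ := exists_norm_eq (Euc 2) (Real.exp_nonneg (-((n + 1 : ℕ) : ℝ)))
  refine ⟨x, Or.inl ⟨n + 1, by omega, hx⟩, ?_, ?_, ?_⟩
  · rw [← norm_pos_iff, hx]
    exact Real.exp_pos _
  · rw [hx, Real.exp_lt_one_iff]
    push_cast
    linarith [Nat.cast_nonneg (α := ℝ) n]
  · rw [hx, ← Real.lt_log_iff_exp_lt hε]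
    push_cast
    linarith

/-- The flow of `X(x,y) = (x² + y²)(−y, x)` restricted to
`Λ = {‖p‖ = e^{−n} : n ≥ 1} ∪ {0}` is not efficient. -/
theorem not_efficient_phiEx : ¬ Efficient phiEx Xex LamEx := by
  rintro ⟨δs, hδs, H⟩
  obtain ⟨x, hxΛ, hx0, hx1, hxδ⟩ := exists_mem_LamEx_norm_lt (half_pos hδs)
  have hr : 0 < ‖x‖ := norm_pos_iff.2 hx0
  set δ := min (δs / 2) 1
  have hδ0 : 0 < δ := lt_min (half_pos hδs) one_pos
  have hδ1 : δ ≤ 1 := min_le_right _ _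
  have hδlt : δ < δs := (min_le_left _ _).trans_lt (half_lt_self hδs)
  have hdist : dist x (-x) = 2 * ‖x‖ := by
    rw [dist_eq_norm, sub_neg_eq_add, ← two_smul ℝ x, norm_smul, Real.norm_two]
  have hsub := H δ hδ0 hδlt x hxΛ
    (fun hfix => by
      have h := hfix (Real.pi / ‖x‖ ^ 2)
      rw [phiEx_half_period hx0] at h
      rw [h, dist_self] at hdist
      linarith)
    (fun t => t + 2 * Real.pi / ‖x‖ ^ 2) (isHplus_add_const _)
    (fun t => by
      rw [phiEx_add_period t hx0, dist_self, norm_Xex, norm_phiEx]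
      positivity)
    (fun t => (diam_arc_phiEx_le x _ _).trans_lt (by linarith)) 0
  have hmem : -x ∈ arc phiEx x 0 (0 + 2 * Real.pi / ‖x‖ ^ 2) := by
    refine ⟨Real.pi / ‖x‖ ^ 2, ?_, phiEx_half_period hx0⟩
    rw [zero_add, uIcc_of_le (by positivity)]
    refine ⟨by positivity, ?_⟩
    gcongr
    linarith [Real.pi_pos]
  have hball := hsub hmem
  rw [phiEx_zero, mem_ball, dist_comm, hdist, norm_Xex] at hball
  have hcube : ‖x‖ ^ 3 ≤ ‖x‖ := pow_le_of_le_one hr.le hx1.le (by norm_num)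
  have : δ * ‖x‖ ^ 3 ≤ 1 * ‖x‖ := mul_le_mul hδ1 hcube (by positivity) zero_le_one
  linarith
end
end

section
/- Let S ⊂ ℝ³ be the unit sphere x² + y² + z² = 1 and let X be the tangent vector field on S defined by X(x,y,z) = (x² + y²)·(xz, yz, −x² − y²). Then any flow φ on S with velocity field X (i.e. satisfying (d/dt)φ_t(p) = X(φ_t(p)) for all p ∈ S and t ∈ ℝ) is rescaling expansive on S. -/
open Metric Set Function

noncomputable section

/-- `φ|Λ` is rescaling expansive (with velocity field `X`): for all `ε > 0` there is
`δ > 0` such that if `x, y ∈ Λ`, `h ∈ H⁺₀(ℝ)` and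
`dist (φ_t x) (φ_{h t} y) ≤ δ‖X (φ_t x)‖` for all `t`, then
`φ_{h t} y ∈ φ_{[-ε,ε]} (φ_t x)` for all `t`. -/
def RescalingExpansive {d : ℕ} (φ : ℝ → Euc d → Euc d) (X : Euc d → Euc d)
    (Λ : Set (Euc d)) : Prop :=
  ∀ ε > (0 : ℝ), ∃ δ > (0 : ℝ), ∀ x ∈ Λ, ∀ y ∈ Λ, ∀ h : ℝ → ℝ, IsHplus0 h →
    (∀ t : ℝ, dist (φ t x) (φ (h t) y) ≤ δ * ‖X (φ t x)‖) →
    ∀ t : ℝ, φ (h t) y ∈ arc φ (φ t x) (-ε) ε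

/-- The vector field `X(x,y,z) = (x² + y²)·(xz, yz, −x² − y²)`, tangent to the
unit sphere of `ℝ³`. -/
def Xsph (p : Euc 3) : Euc 3 :=
  (WithLp.equiv 2 (Fin 3 → ℝ)).symm
    ![(p 0 ^ 2 + p 1 ^ 2) * (p 0 * p 2),
      (p 0 ^ 2 + p 1 ^ 2) * (p 1 * p 2),
      (p 0 ^ 2 + p 1 ^ 2) * (-(p 0 ^ 2) - p 1 ^ 2)]

/-- The distance of a point of `ℝ³` to the vertical axis. -/
def axisDist (p : Euc 3) : ℝ := √(p 0 ^ 2 + p 1 ^ 2)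

/-- The cotangent of the polar angle of a point of `ℝ³`. -/
def polarCot (p : Euc 3) : ℝ := p 2 / axisDist p

/-- The primitive of `w ↦ √(1 + w ^ 2)`; along the flow, `cotTime ∘ polarCot` decreases
at unit speed. -/
def cotTime (w : ℝ) : ℝ := (w * √(1 + w ^ 2) + Real.arsinh w) / 2

lemma axisDist_nonneg (p : Euc 3) : 0 ≤ axisDist p := Real.sqrt_nonneg _

lemma axisDist_sq (p : Euc 3) : axisDist p ^ 2 = p 0 ^ 2 + p 1 ^ 2 :=
  Real.sq_sqrt (by positivity)

lemma axisDist_sq_add_sq {p : Euc 3} (hp : p ∈ sphere (0 : Euc 3) 1) :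
    axisDist p ^ 2 + p 2 ^ 2 = 1 := by
  rw [axisDist_sq]
  have h : ‖p‖ = 1 := by simpa using hp
  have h2 := EuclideanSpace.norm_sq_eq p
  rw [h, Fin.sum_univ_three] at h2
  simpa using h2.symm

lemma dist_sq_eq (p q : Euc 3) :
    dist p q ^ 2 = (p 0 - q 0) ^ 2 + (p 1 - q 1) ^ 2 + (p 2 - q 2) ^ 2 := by
  have h := EuclideanSpace.norm_sq_eq (p - q)
  rw [Fin.sum_univ_three] at h
  simpa [dist_eq_norm] using h

lemma norm_Xsph {p : Euc 3} (hp : p ∈ sphere (0 : Euc 3) 1) :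
    ‖Xsph p‖ = axisDist p ^ 3 := by
  have h := EuclideanSpace.norm_sq_eq (Xsph p)
  rw [Fin.sum_univ_three] at h
  simp only [Xsph, WithLp.equiv_symm_apply, Real.norm_eq_abs, sq_abs, Matrix.cons_val] at h
  have h1 := axisDist_sq_add_sq hp
  have h2 := axisDist_sq p
  rw [← sq_eq_sq₀ (norm_nonneg _) (pow_nonneg (axisDist_nonneg p) 3)]
  refine h.trans ?_
  have h3 : p 2 ^ 2 = 1 - (p 0 ^ 2 + p 1 ^ 2) := by linarith
  have h4 : (axisDist p ^ 3) ^ 2 = (p 0 ^ 2 + p 1 ^ 2) ^ 3 := by rw [← h2]; ring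
  rw [h4]
  simp only [mul_pow, h3]
  ring

/-- The meridional part of the distance: `axisDist` and height are jointly `1`-Lipschitz. -/
lemma sq_axisDist_sub_add_le (p q : Euc 3) :
    (axisDist p - axisDist q) ^ 2 + (p 2 - q 2) ^ 2 ≤ dist p q ^ 2 := by
  rw [dist_sq_eq]
  have hp := axisDist_sq p
  have hq := axisDist_sq q
  have h : p 0 * q 0 + p 1 * q 1 ≤ axisDist p * axisDist q := by
    apply le_of_sq_le_sq _ (mul_nonneg (axisDist_nonneg p) (axisDist_nonneg q))
    rw [mul_pow, hp, hq]
    nlinarith [sq_nonneg (p 0 * q 1 - p 1 * q 0)]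
  nlinarith

lemma abs_axisDist_sub_le (p q : Euc 3) : |axisDist p - axisDist q| ≤ dist p q :=
  abs_le_of_sq_le_sq (by nlinarith [sq_axisDist_sub_add_le p q, sq_nonneg (p 2 - q 2)])
    dist_nonneg

lemma abs_coord_sub_le (p q : Euc 3) (i : Fin 3) : |p i - q i| ≤ dist p q := by
  simpa [dist_eq_norm] using PiLp.norm_apply_le (p - q) i

lemma abs_polarCot_sub_le {p q : Euc 3} (hq : q ∈ sphere (0 : Euc 3) 1)
    (hrp : 0 < axisDist p) (hrq : 0 < axisDist q) :
    |polarCot p - polarCot q| ≤ dist p q / (axisDist p * axisDist q) := by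
  have hE : polarCot p - polarCot q =
      (p 2 * axisDist q - axisDist p * q 2) / (axisDist p * axisDist q) :=
    div_sub_div _ _ hrp.ne' hrq.ne'
  rw [hE, abs_div, abs_of_pos (mul_pos hrp hrq)]
  gcongr
  refine abs_le_of_sq_le_sq ?_ dist_nonneg
  have h1 := sq_axisDist_sub_add_le p q
  have h2 := axisDist_sq_add_sq hq
  have h3 : ((axisDist p - axisDist q) ^ 2 + (p 2 - q 2) ^ 2) * (axisDist q ^ 2 + q 2 ^ 2) =
      (p 2 * axisDist q - axisDist p * q 2) ^ 2 +
        ((axisDist p - axisDist q) * axisDist q + (p 2 - q 2) * q 2) ^ 2 := by ring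
  rw [h2, mul_one] at h3
  nlinarith [sq_nonneg ((axisDist p - axisDist q) * axisDist q + (p 2 - q 2) * q 2)]

lemma sqrt_one_add_polarCot_sq {p : Euc 3} (hp : p ∈ sphere (0 : Euc 3) 1)
    (hr : 0 < axisDist p) : √(1 + polarCot p ^ 2) = 1 / axisDist p := by
  rw [Real.sqrt_eq_iff_mul_self_eq (by positivity) (by positivity), polarCot]
  have := axisDist_sq_add_sq hp
  field_simp
  linarith

/-- A point of the sphere off the axis is determined by its direction and `polarCot`. -/
lemma eq_of_polarCot_eq {p q : Euc 3} (hp : p ∈ sphere (0 : Euc 3) 1)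
    (hq : q ∈ sphere (0 : Euc 3) 1) (hrp : 0 < axisDist p) (hrq : 0 < axisDist q)
    (h0 : p 0 / axisDist p = q 0 / axisDist q) (h1 : p 1 / axisDist p = q 1 / axisDist q)
    (hw : polarCot p = polarCot q) : p = q := by
  have h := sqrt_one_add_polarCot_sq hp hrp
  rw [hw, sqrt_one_add_polarCot_sq hq hrq] at h
  have hr : axisDist p = axisDist q := by
    field_simp at h
    exact h
  unfold polarCot at hw
  rw [hr, div_left_inj' hrq.ne'] at h0 h1 hw
  ext i
  fin_cases i <;> assumption

lemma hasDerivAt_cotTime (w : ℝ) : HasDerivAt cotTime (√(1 + w ^ 2)) w := by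
  have hpos : 0 < 1 + w ^ 2 := by positivity
  have hs : HasDerivAt (fun w : ℝ => 1 + w ^ 2) (2 * w) w := by
    simpa using (hasDerivAt_pow 2 w).const_add 1
  have h := (((hasDerivAt_id w).mul (hs.sqrt hpos.ne')).add
    (Real.hasDerivAt_arsinh w)).div_const 2
  refine h.congr_deriv ?_
  have h2 := Real.sq_sqrt hpos.le
  have h3 : 0 < √(1 + w ^ 2) := Real.sqrt_pos.2 hpos
  simp only [id]
  field_simp
  nlinarith

lemma cotTime_strictMono : StrictMono cotTime :=
  strictMono_of_deriv_pos fun w => by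
    rw [(hasDerivAt_cotTime w).deriv]
    positivity

lemma abs_cotTime_sub_le {v w C : ℝ} (hv : √(1 + v ^ 2) ≤ C) (hw : √(1 + w ^ 2) ≤ C) :
    |cotTime v - cotTime w| ≤ C * |v - w| := by
  refine (convex_uIcc v w).norm_image_sub_le_of_norm_hasDerivWithin_le
    (fun u _ => (hasDerivAt_cotTime u).hasDerivWithinAt) (fun u hu => ?_)
    right_mem_uIcc left_mem_uIcc
  rw [Real.norm_of_nonneg (Real.sqrt_nonneg _)]
  have habs : |u| ≤ max |v| |w| := by
    rcases mem_uIcc.1 hu with h | h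
    · exact abs_le_max_abs_abs h.1 h.2
    · exact max_comm |w| |v| ▸ abs_le_max_abs_abs h.1 h.2
  rcases le_max_iff.1 habs with h | h
  · exact (Real.sqrt_le_sqrt (by linarith [sq_le_sq.2 h])).trans hv
  · exact (Real.sqrt_le_sqrt (by linarith [sq_le_sq.2 h])).trans hw

section Rescaled

variable {p q : Euc 3} {δ : ℝ}

lemma half_axisDist_le (hp : p ∈ sphere (0 : Euc 3) 1) (hδ : δ ≤ 1 / 2)
    (h : dist p q ≤ δ * axisDist p ^ 3) : axisDist p / 2 ≤ axisDist q := by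
  have h1 := (le_abs_self _).trans ((abs_axisDist_sub_le p q).trans h)
  have h2 := axisDist_sq_add_sq hp
  have h3 := axisDist_nonneg p
  have h4 : axisDist p ^ 3 ≤ axisDist p := by
    nlinarith [mul_nonneg h3 (sq_nonneg (p 2))]
  have h5 : δ * axisDist p ^ 3 ≤ 1 / 2 * axisDist p ^ 3 := by gcongr
  linarith

lemma abs_cotTime_polarCot_sub_le (hp : p ∈ sphere (0 : Euc 3) 1)
    (hq : q ∈ sphere (0 : Euc 3) 1) (hr : 0 < axisDist p) (hδ : δ ≤ 1 / 2)
    (h : dist p q ≤ δ * axisDist p ^ 3) :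
    |cotTime (polarCot p) - cotTime (polarCot q)| ≤ 4 * δ := by
  have hhalf := half_axisDist_le hp hδ h
  have hrq : 0 < axisDist q := by linarith
  have hδ0 : 0 ≤ δ := nonneg_of_mul_nonneg_left (dist_nonneg.trans h) (by positivity)
  have hinv : 1 / axisDist q ≤ 2 / axisDist p := by
    rw [div_le_div_iff₀ hrq hr]
    linarith
  have hC := abs_cotTime_sub_le (v := polarCot p) (w := polarCot q) (C := 2 / axisDist p)
    (by rw [sqrt_one_add_polarCot_sq hp hr]; gcongr; norm_num)
    (by rwa [sqrt_one_add_polarCot_sq hq hrq])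
  calc
    _ ≤ 2 / axisDist p * |polarCot p - polarCot q| := hC
    _ ≤ 2 / axisDist p * (δ * axisDist p ^ 3 / (axisDist p * axisDist q)) := by
      gcongr
      exact (abs_polarCot_sub_le hq hr hrq).trans (by gcongr)
    _ = 2 * δ * axisDist p * (1 / axisDist q) := by
      field_simp
    _ ≤ 2 * δ * axisDist p * (2 / axisDist p) := by gcongr
    _ = 4 * δ := by
      field_simp
      ring

lemma abs_direction_sub_le (hrp : 0 < axisDist p) (hrq : 0 < axisDist q)
    (h : dist p q ≤ δ * axisDist p ^ 3) {i : Fin 3} (hi : |q i| ≤ axisDist q) :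
    |p i / axisDist p - q i / axisDist q| ≤ 2 * δ * axisDist p ^ 2 := by
  have hE : p i / axisDist p - q i / axisDist q =
      ((p i - q i) + q i / axisDist q * (axisDist q - axisDist p)) / axisDist p := by
    field_simp
    ring
  rw [hE, abs_div, abs_of_pos hrp, div_le_iff₀ hrp]
  have h1 : |q i / axisDist q| ≤ 1 := by
    rw [abs_div, abs_of_pos hrq]
    exact div_le_one_of_le₀ hi hrq.le
  have h2 := abs_axisDist_sub_le p q
  rw [abs_sub_comm] at h2
  calc
    _ ≤ |p i - q i| + |q i / axisDist q| * |axisDist q - axisDist p| :=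
      (abs_add_le _ _).trans_eq (by rw [abs_mul])
    _ ≤ dist p q + 1 * dist p q := by
      gcongr
      exact abs_coord_sub_le p q i
    _ ≤ 2 * δ * axisDist p ^ 2 * axisDist p := by linarith

end Rescaled

lemma abs_apply_zero_le_axisDist (p : Euc 3) : |p 0| ≤ axisDist p :=
  Real.abs_le_sqrt (by nlinarith [sq_nonneg (p 1)])

lemma abs_apply_one_le_axisDist (p : Euc 3) : |p 1| ≤ axisDist p :=
  Real.abs_le_sqrt (by nlinarith [sq_nonneg (p 0)])

section IntegralCurve

variable {γ : ℝ → Euc 3}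

lemma hasDerivAt_coord {v : Euc 3} {t : ℝ} (hγ : HasDerivAt γ v t) (i : Fin 3) :
    HasDerivAt (fun s => γ s i) (v i) t :=
  (EuclideanSpace.proj i : Euc 3 →L[ℝ] ℝ).hasFDerivAt.comp_hasDerivAt t hγ

lemma hasDerivAt_axisDist_sq {t : ℝ} (hγ : HasDerivAt γ (Xsph (γ t)) t) :
    HasDerivAt (fun s => γ s 0 ^ 2 + γ s 1 ^ 2) (2 * γ t 2 * axisDist (γ t) ^ 4) t := by
  have h := ((hasDerivAt_coord hγ 0).pow 2).add ((hasDerivAt_coord hγ 1).pow 2)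
  refine h.congr_deriv ?_
  have h2 : axisDist (γ t) ^ 4 = (γ t 0 ^ 2 + γ t 1 ^ 2) ^ 2 := by rw [← axisDist_sq]; ring
  rw [h2]
  simp [Xsph]
  ring

lemma hasDerivAt_axisDist {t : ℝ} (hγ : HasDerivAt γ (Xsph (γ t)) t)
    (hr : 0 < axisDist (γ t)) :
    HasDerivAt (fun s => axisDist (γ s)) (γ t 2 * axisDist (γ t) ^ 3) t := by
  have h := (hasDerivAt_axisDist_sq hγ).sqrt
    (by rw [← axisDist_sq]; positivity)
  refine h.congr_deriv ?_
  change _ / (2 * axisDist (γ t)) = _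
  field_simp

/-- Integral curves starting off the axis never reach it. -/
lemma axisDist_pos (hS : ∀ t, γ t ∈ sphere (0 : Euc 3) 1)
    (hγ : ∀ t, HasDerivAt γ (Xsph (γ t)) t) (h0 : 0 < axisDist (γ 0)) (t : ℝ) : 0 < axisDist (γ t) := by
  have hd (c s : ℝ) : HasDerivAt (fun s => (γ s 0 ^ 2 + γ s 1 ^ 2) * Real.exp (c * s))
      ((2 * γ s 2 * axisDist (γ s) ^ 2 + c) * (axisDist (γ s) ^ 2 * Real.exp (c * s))) s := by
    have he : HasDerivAt (fun s => Real.exp (c * s)) (Real.exp (c * s) * c) s := by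
      simpa using ((hasDerivAt_id s).const_mul c).exp
    refine ((hasDerivAt_axisDist_sq (hγ s)).mul he).congr_deriv ?_
    rw [← axisDist_sq]
    ring
  have hbd (s : ℝ) : |2 * γ s 2 * axisDist (γ s) ^ 2| ≤ 2 := by
    have h := axisDist_sq_add_sq (hS s)
    have h1 : |γ s 2| ≤ 1 := abs_le_one_iff_mul_self_le_one.2
      (by nlinarith [sq_nonneg (axisDist (γ s))])
    have h2 : axisDist (γ s) ^ 2 ≤ 1 := by nlinarith [sq_nonneg (γ s 2)]
    rw [abs_mul, abs_mul, abs_of_nonneg (sq_nonneg (axisDist (γ s))), abs_two]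
    nlinarith [abs_nonneg (γ s 2), sq_nonneg (axisDist (γ s))]
  have hup : Monotone fun s => (γ s 0 ^ 2 + γ s 1 ^ 2) * Real.exp (2 * s) :=
    monotone_of_deriv_nonneg (fun s => (hd 2 s).differentiableAt) fun s => by
      rw [(hd 2 s).deriv]
      exact mul_nonneg (by linarith [neg_le_of_abs_le (hbd s)]) (by positivity)
  have hdown : Antitone fun s => (γ s 0 ^ 2 + γ s 1 ^ 2) * Real.exp (-2 * s) :=
    antitone_of_deriv_nonpos (fun s => (hd (-2) s).differentiableAt) fun s => by
      rw [(hd (-2) s).deriv]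
      exact mul_nonpos_of_nonpos_of_nonneg (by linarith [le_of_abs_le (hbd s)])
        (by positivity)
  have h0' : 0 < γ 0 0 ^ 2 + γ 0 1 ^ 2 := Real.sqrt_pos.1 h0
  refine Real.sqrt_pos.2 ?_
  rcases le_total 0 t with h | h
  · have := hup h
    simp only [mul_zero, Real.exp_zero, mul_one] at this
    exact pos_of_mul_pos_left (h0'.trans_le this) (Real.exp_pos _).le
  · have := hdown h
    simp only [mul_zero, Real.exp_zero, mul_one] at this
    exact pos_of_mul_pos_left (h0'.trans_le this) (Real.exp_pos _).le

/-- The horizontal direction is constant along integral curves. -/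
lemma direction_eq (hS : ∀ t, γ t ∈ sphere (0 : Euc 3) 1)
    (hγ : ∀ t, HasDerivAt γ (Xsph (γ t)) t) (h0 : 0 < axisDist (γ 0)) (t : ℝ) :
    γ t 0 / axisDist (γ t) = γ 0 0 / axisDist (γ 0) ∧
      γ t 1 / axisDist (γ t) = γ 0 1 / axisDist (γ 0) := by
  have hr := axisDist_pos hS hγ h0
  have key (i : Fin 3)
      (hi : ∀ s, Xsph (γ s) i = axisDist (γ s) ^ 2 * (γ s i * γ s 2)) :
      γ t i / axisDist (γ t) = γ 0 i / axisDist (γ 0) := by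
    have hd (s : ℝ) : HasDerivAt (fun s => γ s i / axisDist (γ s)) 0 s := by
      refine ((hasDerivAt_coord (hγ s) i).div
        (hasDerivAt_axisDist (hγ s) (hr s)) (hr s).ne').congr_deriv ?_
      rw [hi]
      ring
    exact is_const_of_deriv_eq_zero (fun s => (hd s).differentiableAt) (fun s => (hd s).deriv) t 0
  exact ⟨key 0 fun s => by rw [axisDist_sq]; simp [Xsph],
    key 1 fun s => by rw [axisDist_sq]; simp [Xsph]⟩

lemma cotTime_polarCot_eq (hS : ∀ t, γ t ∈ sphere (0 : Euc 3) 1)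
    (hγ : ∀ t, HasDerivAt γ (Xsph (γ t)) t) (h0 : 0 < axisDist (γ 0)) (t : ℝ) :
    cotTime (polarCot (γ t)) = cotTime (polarCot (γ 0)) - t := by
  have hr := axisDist_pos hS hγ h0
  have hd (s : ℝ) : HasDerivAt (fun s => cotTime (polarCot (γ s)) + s) 0 s := by
    have hw := (hasDerivAt_coord (hγ s) 2).div (hasDerivAt_axisDist (hγ s) (hr s)) (hr s).ne'
    have h := ((hasDerivAt_cotTime (polarCot (γ s))).comp s hw).add (hasDerivAt_id s)
    refine h.congr_deriv ?_
    have hX : Xsph (γ s) 2 = -axisDist (γ s) ^ 4 := by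
      have h4 : axisDist (γ s) ^ 4 = (γ s 0 ^ 2 + γ s 1 ^ 2) ^ 2 := by rw [← axisDist_sq]; ring
      rw [h4]
      simp [Xsph]
      ring
    rw [sqrt_one_add_polarCot_sq (hS s) (hr s), hX]
    have h1 := axisDist_sq_add_sq (hS s)
    have h2 : γ s 2 ^ 2 = 1 - axisDist (γ s) ^ 2 := by linarith
    have h3 := hr s
    field_simp
    rw [h2]
    ring
  have h := is_const_of_deriv_eq_zero (fun s => (hd s).differentiableAt)
    (fun s => (hd s).deriv) t 0
  simp only [add_zero] at h
  linarith

/-- Integral curves come arbitrarily close to the axis. -/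
lemma exists_axisDist_lt (hS : ∀ t, γ t ∈ sphere (0 : Euc 3) 1)
    (hγ : ∀ t, HasDerivAt γ (Xsph (γ t)) t) (h0 : 0 < axisDist (γ 0)) {η : ℝ} (hη : 0 < η) :
    ∃ t, axisDist (γ t) < η := by
  refine ⟨cotTime (polarCot (γ 0)) - cotTime (1 / η), ?_⟩
  set t := cotTime (polarCot (γ 0)) - cotTime (1 / η) with ht
  have hr := axisDist_pos hS hγ h0 t
  have hw : polarCot (γ t) = 1 / η :=
    cotTime_strictMono.injective (by rw [cotTime_polarCot_eq hS hγ h0, ht]; ring)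
  have h := sqrt_one_add_polarCot_sq (hS t) hr
  rw [hw] at h
  have h1 : 1 / η < √(1 + (1 / η) ^ 2) := Real.lt_sqrt_of_sq_lt (by linarith)
  rw [h] at h1
  exact (one_div_lt_one_div hη hr).1 h1

end IntegralCurve

/-- Any flow on the unit sphere `S ⊂ ℝ³` with velocity field
`X(x,y,z) = (x² + y²)(xz, yz, −x² − y²)` is rescaling expansive on `S`. -/
theorem rescalingExpansive_sphere_flow
    (φ : ℝ → Euc 3 → Euc 3)
    (hflow : FlowOn φ (Metric.sphere (0 : Euc 3) 1))
    (hvel : ∀ p ∈ Metric.sphere (0 : Euc 3) 1, ∀ t : ℝ,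
      HasDerivAt (fun s : ℝ => φ s p) (Xsph (φ t p)) t) :
    RescalingExpansive φ Xsph (Metric.sphere (0 : Euc 3) 1) := by
  obtain ⟨-, hmaps, hzero, hadd⟩ := hflow
  have hpos {p : Euc 3} (hp : p ∈ sphere (0 : Euc 3) 1) (hr : 0 < axisDist p) (t : ℝ) :
      0 < axisDist (φ t p) :=
    axisDist_pos (γ := fun s => φ s p) (fun s => hmaps s hp) (hvel p hp)
      (by simpa only [hzero p hp] using hr) t
  have hdir {p : Euc 3} (hp : p ∈ sphere (0 : Euc 3) 1) (hr : 0 < axisDist p) (t : ℝ) :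
      φ t p 0 / axisDist (φ t p) = p 0 / axisDist p ∧
        φ t p 1 / axisDist (φ t p) = p 1 / axisDist p := by
    simpa only [hzero p hp] using direction_eq (γ := fun s => φ s p) (fun s => hmaps s hp)
      (hvel p hp) (by simpa only [hzero p hp] using hr) t
  intro ε hε
  refine ⟨min (1 / 2) (ε / 4), by positivity, fun x hx y hy h hh hdist t => ?_⟩
  set δ := min (1 / 2) (ε / 4) with hδ
  have hδhalf : δ ≤ 1 / 2 := min_le_left _ _
  have hδε : 4 * δ ≤ ε := by linarith [min_le_right (1 / 2) (ε / 4)]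
  have hδ0 : 0 < δ := by positivity
  have hd (s : ℝ) : dist (φ s x) (φ (h s) y) ≤ δ * axisDist (φ s x) ^ 3 := by
    rw [← norm_Xsph (hmaps s hx)]
    exact hdist s
  rcases (axisDist_nonneg x).eq_or_lt with hx0 | hx0
  · have hr : axisDist (φ t x) = 0 := by
      by_contra hne
      have hback := hpos (hmaps t hx) ((axisDist_nonneg _).lt_of_ne' hne) (-t)
      rw [← hadd (-t) t x hx, neg_add_cancel, hzero x hx] at hback
      exact hback.ne hx0
    have hxy : φ t x = φ (h t) y := dist_le_zero.1 (by simpa [hr] using hd t)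
    refine ⟨0, ?_, ?_⟩
    · rw [uIcc_of_le (by linarith)]
      constructor <;> linarith
    · exact (hzero _ (hmaps t hx)).trans hxy
  · have hrx := hpos hx hx0
    have hry (s : ℝ) : 0 < axisDist (φ (h s) y) := by
      linarith [half_axisDist_le (hmaps s hx) hδhalf (hd s), hrx s]
    have hy0 : 0 < axisDist y := by simpa only [hh.2, hzero y hy] using hry 0
    have hsmall {a : ℝ} (ha : ∀ s, |a| ≤ 2 * δ * axisDist (φ s x) ^ 2) : a = 0 := by
      by_contra hne
      obtain ⟨s, hs⟩ := exists_axisDist_lt (γ := fun s => φ s x) (fun s => hmaps s hx)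
        (hvel x hx) (by simpa only [hzero x hx] using hx0)
        (η := √|a|) (by positivity)
      have h1 : axisDist (φ s x) ^ 2 < |a| := (Real.lt_sqrt (hrx s).le).1 hs
      nlinarith [ha s, hrx s, sq_nonneg (axisDist (φ s x))]
    have e0 : x 0 / axisDist x = y 0 / axisDist y := sub_eq_zero.1 <| hsmall fun s => by
      rw [← (hdir hx hx0 s).1, ← (hdir hy hy0 (h s)).1]
      exact abs_direction_sub_le (hrx s) (hry s) (hd s) (abs_apply_zero_le_axisDist _)
    have e1 : x 1 / axisDist x = y 1 / axisDist y := sub_eq_zero.1 <| hsmall fun s => by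
      rw [← (hdir hx hx0 s).2, ← (hdir hy hy0 (h s)).2]
      exact abs_direction_sub_le (hrx s) (hry s) (hd s) (abs_apply_one_le_axisDist _)
    have hp := hmaps t hx
    have hq := hmaps (h t) hy
    have htime := abs_cotTime_polarCot_sub_le hp hq (hrx t) hδhalf (hd t)
    set s := cotTime (polarCot (φ t x)) - cotTime (polarCot (φ (h t) y)) with hs
    refine ⟨s, ?_, ?_⟩
    · rw [uIcc_of_le (by linarith)]
      exact abs_le.1 (htime.trans hδε)
    · refine eq_of_polarCot_eq (hmaps s hp) hq (hpos hp (hrx t) s) (hry t) ?_ ?_ ?_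
      · rw [(hdir hp (hrx t) s).1, (hdir hx hx0 t).1, (hdir hy hy0 (h t)).1, e0]
      · rw [(hdir hp (hrx t) s).2, (hdir hx hx0 t).2, (hdir hy hy0 (h t)).2, e1]
      · apply cotTime_strictMono.injective
        have hc := cotTime_polarCot_eq (γ := fun u => φ u (φ t x)) (fun u => hmaps u hp)
          (hvel _ hp) (by simpa only [hzero _ hp] using hrx t) s
        simp only [hzero _ hp] at hc
        rw [hc, hs]
        ring
end
end
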